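/- Let Γ be a set of temporal valued relations on ℚ such that some bijection of ℚ fails to preserve some relation of Γ (i.e., there exist a bijection β : ℚ → ℚ, a relation R ∈ Γ of arity k, and t ∈ ℚ^k with R(β ∘ t) ≠ R(t)), and such that the constant-zero operation does not improve Γ. Then ⟨Γ⟩ contains the crisp relation Betw, or Cyc, or Sep, or the crisp binary relation <. -/

import Mathlib

/-!
The clone `⟨Γ⟩` consists of temporal valued relations, and since `(ℚ, <)` is homogeneous, the
value of such a relation at a tuple depends only on the order type of the tuple. In particular
every relation attains its infimum.

If the constant-zero operation does not improve `Γ`, the optimal set of some member of `Γ` has no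
constant members; identifying coordinates as far as possible and projecting to two of the
remaining ones gives `<` or `≠` in `⟨Γ⟩` (`clone_lt_or_ne`). In the second case all sets of
injective tuples `OrdRel n Set.univ` are available, and for each `n` one considers the smallest
set of order types of injective `n`-tuples (permutations of `Fin n`) that contains the identity
and defines a crisp relation in `⟨Γ⟩`. Permuting coordinates shows that it is a group,
`patGroup Γ n`, and restricting coordinates shows that these groups are coherent (`PatSys`): the
patterns of members of the `n`-th group at any `k` positions are exactly the members of the
`k`-th group. A relation of `Γ` not preserved by some bijection makes one of them proper
(`exists_patGroup_ne_top`).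

It remains to find the first proper group `P (n + 1)` of a coherent sequence (`classification`);
this is a finitary form of Cameron's theorem on highly homogeneous groups. As `P n` is the full
symmetric group and `P (n + 1)` projects onto it, the index of `P (n + 1)` is at most `n + 1`, and
for `n ≥ 3` equality is impossible: a member of `P N` would be determined by its pattern at `n`
positions, so that `P N` would be bounded in size, contradicting the pigeonhole principle
(`card_ne_factorial`). For `n ≥ 4` only the alternating group is left, and a parity argument
excludes it (`ne_alternatingGroup`). The small cases leave the trivial group of degree two, the
group of the reversal and the alternating group in degree three, and the dihedral group in degree
four, which correspond to `<`, `Betw`, `Cyc` and `Sep`.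
-/

open Classical

/-- A valued relation of arity `k` on `ℚ`. -/
abbrev VRel (k : ℕ) : Type := (Fin k → ℚ) → WithTop ℚ

/-- The crisp valued relation associated to a set of tuples: `0` on the set, `∞` off it. -/
noncomputable def crisp {k : ℕ} (S : Set (Fin k → ℚ)) : VRel k :=
  fun t => if t ∈ S then 0 else ⊤

/-- A unary operation improves a valued relation. -/
def Improves1 (f : ℚ → ℚ) {k : ℕ} (R : VRel k) : Prop :=
  ∀ t : Fin k → ℚ, R (fun i => f (t i)) ≤ R t

/-- A binary operation improves a valued relation: `2·R(g(s,t)) ≤ R(s) + R(t)`. -/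
def Improves2 (g : ℚ → ℚ → ℚ) {k : ℕ} (R : VRel k) : Prop :=
  ∀ s t : Fin k → ℚ, 2 • R (fun i => g (s i) (t i)) ≤ R s + R t

/-- A valued relation is temporal if it is invariant under all order-preserving
bijections of `ℚ`. -/
def Temporal {k : ℕ} (R : VRel k) : Prop :=
  ∀ α : ℚ → ℚ, Function.Bijective α → StrictMono α →
    ∀ t : Fin k → ℚ, R (fun i => α (t i)) = R t

/-- A valued relation is `Sym(ℚ)`-invariant if it is invariant under all bijections of `ℚ`. -/
def SymInvariant {k : ℕ} (R : VRel k) : Prop :=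
  ∀ α : ℚ → ℚ, Function.Bijective α →
    ∀ t : Fin k → ℚ, R (fun i => α (t i)) = R t

/-- The valued relational clone generated by a set `Γ` of valued relations on `ℚ`:
the smallest set of valued relations containing `Γ`, crisp equality and the crisp empty
unary relation, closed under sums of atomic expressions, projection (infimum over extra
coordinates), shifting, nonnegative scaling, `Feas` and `Opt`. -/
inductive Clone (Γ : Set ((k : ℕ) × VRel k)) : {k : ℕ} → VRel k → Prop where
  | base {k : ℕ} {R : VRel k} : Sigma.mk k R ∈ Γ → Clone Γ R
  | eqRel : Clone Γ (crisp {t : Fin 2 → ℚ | t 0 = t 1})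
  | emptyRel : Clone Γ (crisp (∅ : Set (Fin 1 → ℚ)))
  | sum {m n : ℕ} {k : Fin m → ℕ} {R : ∀ i : Fin m, VRel (k i)}
      (σ : ∀ i : Fin m, Fin (k i) → Fin n) :
      (∀ i : Fin m, Clone Γ (R i)) →
      Clone Γ (fun x : Fin n → ℚ => ∑ i : Fin m, R i (fun j => x (σ i j)))
  | proj {k n : ℕ} {R : VRel (k + n)} {R' : VRel k} :
      Clone Γ R →
      (∀ s : Fin k → ℚ,
        IsGLB {v : WithTop ℚ | ∃ t : Fin n → ℚ, v = R (Fin.append s t)} (R' s)) →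
      Clone Γ R'
  | shift {k : ℕ} {R : VRel k} (c : ℚ) :
      Clone Γ R → Clone Γ (fun t => R t + (c : WithTop ℚ))
  | scale {k : ℕ} {R : VRel k} (q : ℚ) (hq : 0 ≤ q) :
      Clone Γ R → Clone Γ (fun t => (q : WithTop ℚ) * R t)
  | feas {k : ℕ} {R : VRel k} :
      Clone Γ R → Clone Γ (fun t => if R t ≠ ⊤ then 0 else ⊤)
  | opt {k : ℕ} {R : VRel k} :
      Clone Γ R → Clone Γ (fun t => if R t ≠ ⊤ ∧ ∀ s, R t ≤ R s then 0 else ⊤)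

/-- The crisp binary order relation `<` on `ℚ`. -/
def LtS : Set (Fin 2 → ℚ) := {t | t 0 < t 1}

/-- The crisp binary disequality relation on `ℚ`. -/
def NeS : Set (Fin 2 → ℚ) := {t | t 0 ≠ t 1}

def BetwS : Set (Fin 3 → ℚ) :=
  {t | (t 0 < t 1 ∧ t 1 < t 2) ∨ (t 2 < t 1 ∧ t 1 < t 0)}

def CycS : Set (Fin 3 → ℚ) :=
  {t | (t 0 < t 1 ∧ t 1 < t 2) ∨ (t 1 < t 2 ∧ t 2 < t 0) ∨ (t 2 < t 0 ∧ t 0 < t 1)}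

/-- `c` lies strictly between `a` and `b`. -/
def StrictBetween (a b c : ℚ) : Prop := (a < c ∧ c < b) ∨ (b < c ∧ c < a)

def SepS : Set (Fin 4 → ℚ) :=
  {t | Function.Injective t ∧
    Xor' (StrictBetween (t 0) (t 1) (t 2)) (StrictBetween (t 0) (t 1) (t 3))}

def T3S : Set (Fin 3 → ℚ) :=
  {t | (t 0 = t 1 ∧ t 1 < t 2) ∨ (t 0 = t 2 ∧ t 2 < t 1)}

def NegT3S : Set (Fin 3 → ℚ) := {t | (fun i => -(t i)) ∈ T3S}

def DisS : Set (Fin 3 → ℚ) :=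
  {t | (t 0 = t 1 ∧ t 1 ≠ t 2) ∨ (t 0 ≠ t 1 ∧ t 1 = t 2)}

/-- The binary valued relation `R_{α,β,γ}` on `ℚ`. -/
noncomputable def Rabc (a b c : WithTop ℚ) : VRel 2 :=
  fun t => if t 0 = t 1 then a else if t 0 < t 1 then b else c

/-- A lex-operation on `ℚ`. -/
def IsLex (l : ℚ → ℚ → ℚ) : Prop :=
  ∀ x x' y y' : ℚ, l x y < l x' y' ↔ (x < x' ∨ (x = x' ∧ y < y'))

/-- The dual of a binary operation on `ℚ`. -/
def dualOp (g : ℚ → ℚ → ℚ) : ℚ → ℚ → ℚ := fun x y => -g (-x) (-y)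

/-- Operations of `mx` type. -/
def IsMx (g : ℚ → ℚ → ℚ) : Prop :=
  ∃ ene eeq : ℚ → ℚ, StrictMono ene ∧ StrictMono eeq ∧
    (∀ x ε : ℚ, 0 < ε → ene x < eeq x ∧ eeq x < ene (x + ε)) ∧
    ∀ x y : ℚ, g x y = if x = y then eeq x else ene (min x y)

/-- Operations of `mi` type. -/
def IsMi (g : ℚ → ℚ → ℚ) : Prop :=
  ∃ elt eeq egt : ℚ → ℚ, StrictMono elt ∧ StrictMono eeq ∧ StrictMono egt ∧
    (∀ x ε : ℚ, 0 < ε → eeq x < egt x ∧ egt x < elt x ∧ elt x < eeq (x + ε)) ∧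
    ∀ x y : ℚ, g x y = if x < y then elt x else if x = y then eeq x else egt y

/-- Operations of `lele` type. -/
def IsLele (g : ℚ → ℚ → ℚ) : Prop :=
  ∃ eneg epos : ℚ → ℚ, StrictMono eneg ∧ StrictMono epos ∧
    (∀ x, eneg x < 0) ∧ (∀ x, 0 < epos x) ∧
    ∃ l, IsLex l ∧
      ∀ x y : ℚ, g x y = if x ≤ 0 then l (eneg x) (eneg y) else l (epos y) (epos x)

/-- A binary operation preserves a crisp relation (given as a set of tuples). -/
def Pres2 (g : ℚ → ℚ → ℚ) {k : ℕ} (S : Set (Fin k → ℚ)) : Prop :=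
  ∀ s t : Fin k → ℚ, s ∈ S → t ∈ S → (fun i => g (s i) (t i)) ∈ S

/-- The feasibility relation of a valued relation. -/
def FeasSet {k : ℕ} (R : VRel k) : Set (Fin k → ℚ) := {t | R t ≠ ⊤}

/-- The set of minimal-value feasible tuples of a valued relation. -/
def OptSet {k : ℕ} (R : VRel k) : Set (Fin k → ℚ) := {t | R t ≠ ⊤ ∧ ∀ s, R t ≤ R s}

/-- `g` preserves every relation of the crisp structure `Γ̂`, consisting of `Feas(R)`
for `R ∈ Γ` and `Opt(R_σ)` for all minors `R_σ` of relations `R ∈ Γ`. -/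
def PresHat (g : ℚ → ℚ → ℚ) (Γ : Set ((k : ℕ) × VRel k)) : Prop :=
  ∀ p ∈ Γ, Pres2 g (FeasSet p.2) ∧
    ∀ (n : ℕ) (σ : Fin p.1 → Fin n),
      Pres2 g (OptSet (fun x : Fin n → ℚ => p.2 (fun j => x (σ j))))

/-- `g` is min, max, of mx/mi/lele type, or the dual of an mx/mi/lele type operation. -/
def GoodOp (g : ℚ → ℚ → ℚ) : Prop :=
  g = (fun x y => min x y) ∨ g = (fun x y => max x y) ∨ IsMx g ∨ IsMi g ∨ IsLele g ∨
    ∃ h, (IsMx h ∨ IsMi h ∨ IsLele h) ∧ g = dualOp h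

/-- `g` is the constant-zero binary operation, min, max, or of mx/mi/lele type. -/
def BaseOp (g : ℚ → ℚ → ℚ) : Prop :=
  g = (fun _ _ => (0 : ℚ)) ∨ g = (fun x y => min x y) ∨ g = (fun x y => max x y) ∨
    IsMx g ∨ IsMi g ∨ IsLele g


open Equiv (Perm)
open scoped Pointwise

/-! ### Coherent sequences of permutation groups -/

/-- `Pat e π ρ`: the permutation `ρ` is the pattern (relative order of values) of `π` at the
positions selected by `e`. -/
def Pat {k n : ℕ} (e : Fin k → Fin n) (π : Perm (Fin n)) (ρ : Perm (Fin k)) : Prop :=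
  ∀ i j, π (e i) < π (e j) ↔ ρ i < ρ j

/-- A coherent sequence of permutation groups: the patterns of members of `P n` at any `k`
positions are exactly the members of `P k`. -/
structure PatSys (P : ∀ n, Subgroup (Perm (Fin n))) : Prop where
  down : ∀ {k n : ℕ} (e : Fin k ↪o Fin n) (π : Perm (Fin n)) (ρ : Perm (Fin k)),
    π ∈ P n → Pat e π ρ → ρ ∈ P k
  up : ∀ {k n : ℕ} (e : Fin k ↪o Fin n) (ρ : Perm (Fin k)),
    ρ ∈ P k → ∃ π ∈ P n, Pat e π ρ

theorem exists_pattern {k : ℕ} {α : Type*} [LinearOrder α] (f : Fin k → α)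
    (hf : Function.Injective f) : ∃ ρ : Perm (Fin k), ∀ i j, f i < f j ↔ ρ i < ρ j := by
  refine ⟨(Tuple.sort f).symm, fun i j => ?_⟩
  have h : StrictMono (f ∘ Tuple.sort f) :=
    (Tuple.monotone_sort f).strictMono_of_injective (hf.comp (Equiv.injective _))
  have := h.lt_iff_lt (a := (Tuple.sort f).symm i) (b := (Tuple.sort f).symm j)
  simpa using this

theorem pattern_unique {k : ℕ} {ρ ρ' : Perm (Fin k)}
    (h : ∀ i j, ρ i < ρ j ↔ ρ' i < ρ' j) : ρ = ρ' := by
  have h1 : StrictMono (fun i => ρ' (ρ.symm i)) := by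
    intro i j hij
    rw [← h]; simpa using hij
  have h2 : (fun i => ρ' (ρ.symm i)) = id :=
    (StrictMono.range_inj h1 strictMono_id).1 (by
      rw [Set.range_id]; exact (ρ.symm.trans ρ').surjective.range_eq)
  ext i
  have := congrFun h2 (ρ i)
  simp at this
  rw [this]

theorem exists_pat {k n : ℕ} (e : Fin k ↪o Fin n) (π : Perm (Fin n)) : ∃ ρ, Pat e π ρ :=
  exists_pattern (fun i => π (e i)) (π.injective.comp e.injective)

/-! ### Parity under deletion, and subgroups of order eight in degree four -/

/-- The parity of a permutation in terms of that of the permutation obtained by deleting the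
position `a`. -/
theorem sign_delete {n : ℕ} (π : Perm (Fin (n + 1))) (ρ : Perm (Fin n)) (a : Fin (n + 1))
    (h : ∀ i, π (a.succAbove i) = (π a).succAbove (ρ i)) :
    Perm.sign π = (-1) ^ ((π a : ℕ) + a) * Perm.sign ρ := by
  have key : π = (Fin.cycleRange (π a))⁻¹ * Equiv.Perm.decomposeFin.symm (0, ρ) *
      Fin.cycleRange a := by
    refine Equiv.ext fun x => ?_
    rcases Fin.eq_self_or_eq_succAbove a x with rfl | ⟨i, rfl⟩
    · simp [Perm.inv_def]
    · simp [Perm.inv_def, h]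
  rw [key]
  simp [pow_add, mul_comm, mul_left_comm]

/-- The dihedral group of the `4`-cycle `(0 1 2 3)`: the permutations preserving the partition
`{0, 2} | {1, 3}`. -/
def D4 : Subgroup (Perm (Fin 4)) where
  carrier := {π | (π 0).val % 2 = (π 2).val % 2}
  one_mem' := by decide
  mul_mem' := by
    intro a b ha hb
    exact (by decide +kernel : ∀ π ρ : Perm (Fin 4), (π 0).val % 2 = (π 2).val % 2 →
      (ρ 0).val % 2 = (ρ 2).val % 2 → ((π * ρ) 0).val % 2 = ((π * ρ) 2).val % 2) a b ha hb
  inv_mem' := by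
    intro a ha
    exact (by decide +kernel : ∀ π : Perm (Fin 4), (π 0).val % 2 = (π 2).val % 2 →
      ((π⁻¹) 0).val % 2 = ((π⁻¹) 2).val % 2) a ha

theorem mem_D4 {π : Perm (Fin 4)} : π ∈ D4 ↔ (π 0).val % 2 = (π 2).val % 2 := Iff.rfl

theorem card_D4 : Nat.card D4 = 8 := by
  have : Nat.card D4 = Nat.card {π : Perm (Fin 4) // (π 0).val % 2 = (π 2).val % 2} := rfl
  rw [this, Nat.card_eq_fintype_card]
  decide +kernel

/-- The conjugates of `D4` by `g` are the stabilizers of the three partitions of four points into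
two pairs. -/
theorem conj_D4 : ∀ g : Perm (Fin 4),
    (∀ h : Perm (Fin 4), (g⁻¹ (h (g 0))).val % 2 = (g⁻¹ (h (g 2))).val % 2 ↔
      (h 0).val % 2 = (h 2).val % 2) ∨
    (∀ h : Perm (Fin 4), (g⁻¹ (h (g 0))).val % 2 = (g⁻¹ (h (g 2))).val % 2 ↔
      (h 0).val / 2 = (h 1).val / 2) ∨
    (∀ h : Perm (Fin 4), (g⁻¹ (h (g 0))).val % 2 = (g⁻¹ (h (g 2))).val % 2 ↔
      ((h 0).val + 1) / 2 % 2 = ((h 3).val + 1) / 2 % 2) := by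
  decide +kernel

/-- By Sylow's theorem the subgroups of order eight are the conjugates of `D4`. -/
theorem subgroup_card_eight (G : Subgroup (Perm (Fin 4))) (hG : Nat.card G = 8) :
    G = D4 ∨ (∀ h, h ∈ G ↔ (h 0).val / 2 = (h 1).val / 2) ∨
      (∀ h, h ∈ G ↔ ((h 0).val + 1) / 2 % 2 = ((h 3).val + 1) / 2 % 2) := by
  have : Fact (Nat.Prime 2) := ⟨Nat.prime_two⟩
  have hf : (8 : ℕ) = 2 ^ (Nat.card (Perm (Fin 4))).factorization 2 := by
    have h24 : Nat.card (Perm (Fin 4)) = 2 ^ 3 * 3 := by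
      rw [Nat.card_perm, Nat.card_fin]; rfl
    have h3 : Nat.factorization 3 2 = 0 := Nat.factorization_eq_zero_of_not_dvd (by norm_num)
    rw [h24, Nat.factorization_mul (by norm_num) (by norm_num), Nat.Prime.factorization_pow
      Nat.prime_two]
    simp [h3]
  let S : Sylow 2 (Perm (Fin 4)) := Sylow.ofCard G (hG.trans hf)
  let T : Sylow 2 (Perm (Fin 4)) := Sylow.ofCard D4 (card_D4.trans hf)
  obtain ⟨g, hg⟩ := MulAction.exists_smul_eq (Perm (Fin 4)) T S
  have hmem : ∀ h, h ∈ G ↔ (g⁻¹ (h (g 0))).val % 2 = (g⁻¹ (h (g 2))).val % 2 := by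
    intro h
    have h1 : G = MulAut.conj g • D4 := (congrArg Sylow.toSubgroup hg).symm
    rw [h1, Subgroup.mem_pointwise_smul_iff_inv_smul_mem, mem_D4]
    simp [← map_inv]
  rcases conj_D4 g with h | h | h
  · left
    ext x
    rw [hmem, h, mem_D4]
  · exact Or.inr (Or.inl fun x => (hmem x).trans (h x))
  · exact Or.inr (Or.inr fun x => (hmem x).trans (h x))

/-! ### The first proper group of a coherent sequence -/

section Sys
variable {P : ∀ n, Subgroup (Perm (Fin n))} (hP : PatSys P)
include hP

theorem factorial_le_card {n : ℕ} (hn : P n = ⊤) {N : ℕ} (e : Fin n ↪o Fin N) :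
    n.factorial ≤ Nat.card (P N) := by
  choose f hf using fun ρ : Perm (Fin n) => hP.up e ρ (by rw [hn]; trivial)
  have : Function.Injective (fun ρ => (⟨f ρ, (hf ρ).1⟩ : P N)) := by
    intro ρ ρ' h
    have h' : f ρ = f ρ' := congrArg Subtype.val h
    refine pattern_unique fun i j => ?_
    rw [← (hf ρ).2, ← (hf ρ').2, h']
  have := Nat.card_le_card_of_injective _ this
  rwa [Nat.card_perm, Nat.card_fin] at this

/-- The cosets of `P (n + 1)` number at most `(n + 1)! / n!`. -/
theorem index_le {n : ℕ} (hn : P n = ⊤) : (P (n + 1)).index ≤ n + 1 := by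
  have h1 := factorial_le_card hP hn (Fin.castSuccOrderEmb (n := n))
  have h2 := (P (n + 1)).card_mul_index
  rw [Nat.card_perm, Nat.card_fin, Nat.factorial_succ] at h2
  have h3 := n.factorial_pos
  by_contra! h
  nlinarith

/-- If deleting a position loses no information about members of `P (n + 1)`, then for every `N`
a member of `P N` is determined by its pattern at any `n` positions. -/
theorem eq_of_agree {n : ℕ} (hn : P n = ⊤) (h0 : 0 < n)
    (hc : Nat.card (P (n + 1)) = n.factorial) {N : ℕ} {π π' : Perm (Fin N)} (hπ : π ∈ P N)
    (hπ' : π' ∈ P N) (E : Finset (Fin N)) (hE : E.card = n)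
    (h : ∀ i ∈ E, ∀ j ∈ E, π i < π j ↔ π' i < π' j) : π = π' := by
  -- one position more: the restriction map `P (n + 1) → Perm (Fin n)` is bijective
  have U : ∀ (a : Fin (n + 1)) (ρ ρ' : Perm (Fin (n + 1))), ρ ∈ P (n + 1) → ρ' ∈ P (n + 1) →
      (∀ i j, i ≠ a → j ≠ a → (ρ i < ρ j ↔ ρ' i < ρ' j)) → ρ = ρ' := by
    intro a ρ ρ' hρ hρ' hag
    choose Φ hΦ using fun ρ : P (n + 1) => exists_pat (Fin.succAboveOrderEmb a) ρ.1
    have hs : Function.Surjective Φ := by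
      intro τ
      obtain ⟨σ, hσ, hp⟩ := hP.up (Fin.succAboveOrderEmb a) τ (by rw [hn]; trivial)
      refine ⟨⟨σ, hσ⟩, pattern_unique fun i j => ?_⟩
      rw [← hΦ, ← hp]
    have hb : Function.Bijective Φ :=
      (Nat.bijective_iff_surjective_and_card Φ).2
        ⟨hs, by rw [hc, Nat.card_perm, Nat.card_fin]⟩
    have : (⟨ρ, hρ⟩ : P (n + 1)) = ⟨ρ', hρ'⟩ := by
      apply hb.1
      refine pattern_unique fun i j => ?_
      rw [← hΦ, ← hΦ]
      exact hag _ _ (Fin.succAbove_ne _ _) (Fin.succAbove_ne _ _)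
    exact congrArg Subtype.val this
  have U' : ∀ (E : Finset (Fin N)), E.card = n → (∀ i ∈ E, ∀ j ∈ E, π i < π j ↔ π' i < π' j) →
      ∀ c ∉ E, ∀ i ∈ insert c E, ∀ j ∈ insert c E, π i < π j ↔ π' i < π' j := by
    intro E hE h c hc i hi j hj
    have hcard : (insert c E).card = n + 1 := by rw [Finset.card_insert_of_notMem hc, hE]
    let e := (insert c E).orderEmbOfFin hcard
    have hr : ∀ x ∈ insert c E, ∃ y, e y = x := by
      intro x hx
      have := Finset.range_orderEmbOfFin (insert c E) hcard
      have h2 : x ∈ Set.range ((insert c E).orderEmbOfFin hcard) := by rw [this]; exact hx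
      exact h2
    have hm : ∀ y, e y ∈ insert c E := fun y => Finset.orderEmbOfFin_mem _ hcard y
    obtain ⟨ρ, hρ⟩ := exists_pat e π
    obtain ⟨ρ', hρ'⟩ := exists_pat e π'
    obtain ⟨a, ha⟩ := hr c (Finset.mem_insert_self _ _)
    have hEa : ∀ y, y ≠ a → e y ∈ E := by
      intro y hy
      rcases Finset.mem_insert.1 (hm y) with h1 | h1
      · exact absurd (e.injective (h1.trans ha.symm)) hy
      · exact h1
    have : ρ = ρ' := U a ρ ρ' (hP.down e π ρ hπ hρ) (hP.down e π' ρ' hπ' hρ') (by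
      intro i j hi hj
      rw [← hρ, ← hρ']
      exact h _ (hEa i hi) _ (hEa j hj))
    obtain ⟨x, rfl⟩ := hr i hi
    obtain ⟨y, rfl⟩ := hr j hj
    rw [hρ, hρ', this]
  have hins : ∀ c, ∀ i ∈ insert c E, ∀ j ∈ insert c E, π i < π j ↔ π' i < π' j := by
    intro c
    by_cases hc : c ∈ E
    · rw [Finset.insert_eq_of_mem hc]; exact h
    · exact U' E hE h c hc
  refine pattern_unique fun c d => ?_
  by_cases hcd : c = d
  · subst hcd; simp
  by_cases hcE : c ∈ E
  · exact hins d c (by simp [hcE]) d (by simp)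
  by_cases hdE : d ∈ E
  · exact hins c c (by simp) d (by simp [hdE])
  -- replace a position of `E` by `c`, then add `d`
  obtain ⟨x, hx⟩ : E.Nonempty := Finset.card_pos.1 (by omega)
  have hcx : c ∉ E.erase x := fun h => hcE (Finset.mem_of_mem_erase h)
  refine U' (insert c (E.erase x)) ?_ ?_ d ?_ c (by simp) d (by simp)
  · rw [Finset.card_insert_of_notMem hcx, Finset.card_erase_of_mem hx]; omega
  · intro i hi j hj
    have hsub : insert c (E.erase x) ⊆ insert c E :=
      Finset.insert_subset_insert _ (Finset.erase_subset _ _)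
    exact hins c i (hsub hi) j (hsub hj)
  · simp only [Finset.mem_insert, not_or]
    exact ⟨fun h => hcd h.symm, fun h => hdE (Finset.mem_of_mem_erase h)⟩

/-- The restriction maps `P (n + 1) → P n = Perm (Fin n)` are not injective for `n ≥ 3`. Otherwise
`P N` has at most `n!` members for all `N`, and by the pigeonhole principle some three
positions `0 < b < c` are such that no member of `P N` has its value at `0` between the other two. -/
theorem card_ne_factorial {n : ℕ} (hn : P n = ⊤) (h3 : 3 ≤ n) (hP3 : P 3 = ⊤) :
    Nat.card (P (n + 1)) ≠ n.factorial := by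
  intro hc
  let K := n.factorial
  let N := 2 ^ K + n + 1
  have hcard : Nat.card (P (N + 1)) ≤ K := by
    let e : Fin n ↪o Fin (N + 1) := Fin.castLEOrderEmb
      (by have := Nat.one_le_two_pow (n := K); simp only [N]; omega)
    choose Φ hΦ using fun ρ : P (N + 1) => exists_pat e ρ.1
    have hi : Function.Injective Φ := by
      intro ρ ρ' h
      apply Subtype.ext
      refine eq_of_agree hP hn (by omega) hc ρ.2 ρ'.2 (Finset.univ.map e.toEmbedding) (by simp) ?_
      intro i hi j hj
      obtain ⟨x, -, rfl⟩ := Finset.mem_map.1 hi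
      obtain ⟨y, -, rfl⟩ := Finset.mem_map.1 hj
      have h1 := hΦ ρ x y
      have h2 := hΦ ρ' x y
      rw [h] at h1
      exact h1.trans h2.symm
    have := Nat.card_le_card_of_injective _ hi
    rwa [Nat.card_perm, Nat.card_fin] at this
  obtain ⟨b, c, hbc, hv⟩ : ∃ b c : Fin N, b < c ∧
      ∀ π ∈ P (N + 1), (π 0 < π b.succ ↔ π 0 < π c.succ) := by
    let v : Fin N → (P (N + 1) → Prop) := fun b π => π.1 0 < π.1 b.succ
    have hlt : Fintype.card (P (N + 1) → Prop) < Fintype.card (Fin N) := by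
      rw [Fintype.card_fun, Fintype.card_prop, Fintype.card_fin, ← Nat.card_eq_fintype_card]
      have := Nat.pow_le_pow_right (n := 2) (by norm_num) hcard
      omega
    obtain ⟨b, c, hbc, hv⟩ := Fintype.exists_ne_map_eq_of_card_lt v hlt
    rcases lt_or_gt_of_ne hbc with h | h
    · exact ⟨b, c, h, fun π hπ => iff_of_eq (congrFun hv ⟨π, hπ⟩)⟩
    · exact ⟨c, b, h, fun π hπ => iff_of_eq (congrFun hv ⟨π, hπ⟩).symm⟩
  have he : StrictMono ![(0 : Fin (N + 1)), b.succ, c.succ] := by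
    rw [Fin.strictMono_iff_lt_succ]
    intro i
    fin_cases i
    · simp
    · simpa using hbc
  obtain ⟨π, hπ, hp⟩ := hP.up (OrderEmbedding.ofStrictMono _ he) (Equiv.swap 0 1)
    (by rw [hP3]; trivial)
  have h1 := hp 1 0
  have h2 := hp 0 2
  have h3 := hp 0 1
  have e1 : (Equiv.swap (0 : Fin 3) 1) 0 = 1 := by decide
  have e2 : (Equiv.swap (0 : Fin 3) 1) 1 = 0 := by decide
  have e3 : (Equiv.swap (0 : Fin 3) 1) 2 = 2 := by decide
  simp [e1, e2, e3] at h1 h2 h3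
  have := (hv π hπ).2 h2
  exact absurd this (not_lt.2 h3)

/-- No member of a coherent sequence is an alternating group of degree at least four.
If all deletions of `π` are even, then positions and values of `π` have constant parity
difference; the `3`-cycle `(0 1 2)` cannot be extended by one position to such a `π`. -/
theorem ne_alternatingGroup {k : ℕ} (h : P (k + 4) = alternatingGroup (Fin (k + 4))) : False := by
  have d : ∀ i j : ℕ, i < 4 → j < 4 → i ≠ j →
      (⟨i % (k+4), Nat.mod_lt _ (by omega)⟩ : Fin (k + 4)) ≠ ⟨j % (k+4), Nat.mod_lt _ (by omega)⟩ := by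
    intro i j hi hj hij
    rw [Ne, Fin.mk.injEq, Nat.mod_eq_of_lt (by omega), Nat.mod_eq_of_lt (by omega)]
    exact hij
  have n01 : (0 : Fin (k + 4)) ≠ 1 := d 0 1 (by norm_num) (by norm_num) (by norm_num)
  have n02 : (0 : Fin (k + 4)) ≠ 2 := d 0 2 (by norm_num) (by norm_num) (by norm_num)
  have n12 : (1 : Fin (k + 4)) ≠ 2 := d 1 2 (by norm_num) (by norm_num) (by norm_num)
  have n30 : (3 : Fin (k + 4)) ≠ 0 := d 3 0 (by norm_num) (by norm_num) (by norm_num)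
  have n31 : (3 : Fin (k + 4)) ≠ 1 := d 3 1 (by norm_num) (by norm_num) (by norm_num)
  have n32 : (3 : Fin (k + 4)) ≠ 2 := d 3 2 (by norm_num) (by norm_num) (by norm_num)
  let c : Perm (Fin (k + 4)) := Equiv.swap 0 1 * Equiv.swap 1 2
  have hc : c ∈ P (k + 4) := by
    rw [h, Equiv.Perm.mem_alternatingGroup]
    simp [c, Perm.sign_swap n01, Perm.sign_swap n12]
  obtain ⟨π, hπ, hp⟩ := hP.up (Fin.succAboveOrderEmb (Fin.last _)) c hc
  have hdel : ∀ a : Fin (k + 4 + 1), ∃ ρ : Perm (Fin (k + 4)), ρ ∈ P (k + 4) ∧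
      ∀ i, π (a.succAbove i) = (π a).succAbove (ρ i) := by
    intro a
    have hne : ∀ i, π (a.succAbove i) ≠ π a := fun i h =>
      Fin.succAbove_ne a i (π.injective h)
    choose f hf using fun i => Fin.exists_succAbove_eq (hne i)
    have hinj : Function.Injective f := by
      intro i j hij
      have : π (a.succAbove i) = π (a.succAbove j) := by rw [← hf i, ← hf j, hij]
      exact Fin.succAbove_right_injective (π.injective this)
    let ρ : Perm (Fin (k + 4)) := Equiv.ofBijective f (Finite.injective_iff_bijective.1 hinj)
    have hρ : ∀ i, π (a.succAbove i) = (π a).succAbove (ρ i) := fun i => (hf i).symm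
    refine ⟨ρ, hP.down (Fin.succAboveOrderEmb a) π ρ hπ fun i j => ?_, hρ⟩
    simp only [Fin.succAboveOrderEmb_apply, hρ]
    exact (Fin.strictMono_succAbove _).lt_iff_lt
  have hpar : ∀ a, Perm.sign π = (-1) ^ ((π a : ℕ) + a) := by
    intro a
    obtain ⟨ρ, hρ, hρ'⟩ := hdel a
    rw [h, Equiv.Perm.mem_alternatingGroup] at hρ
    rw [sign_delete π ρ a hρ', hρ, mul_one]
  have hpar' : ∀ a b, ((π a : ℕ) + a) % 2 = ((π b : ℕ) + b) % 2 := by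
    intro a b
    have := (hpar a).symm.trans (hpar b)
    rcases Nat.even_or_odd ((π a : ℕ) + a) with h1 | h1 <;>
    rcases Nat.even_or_odd ((π b : ℕ) + b) with h2 | h2
    · rw [Nat.even_iff] at h1 h2; omega
    · rw [h1.neg_one_pow, h2.neg_one_pow] at this; exact absurd this (by decide)
    · rw [h1.neg_one_pow, h2.neg_one_pow] at this; exact absurd this (by decide)
    · rw [Nat.odd_iff] at h1 h2; omega
  obtain ⟨ρ, -, hρ⟩ := hdel (Fin.last _)
  have hρc : ρ = c := by
    refine pattern_unique fun i j => ?_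
    rw [← hp i j]
    simp only [Fin.succAboveOrderEmb_apply, hρ]
    exact (Fin.strictMono_succAbove _).lt_iff_lt.symm
  subst hρc
  set v := π (Fin.last _) with hv
  have hval : ∀ i : Fin (k + 4), (π i.castSucc : ℕ) = if (c i : ℕ) < v then (c i : ℕ) else (c i : ℕ) + 1 := by
    intro i
    have := hρ i
    rw [Fin.succAbove_last] at this
    rw [this, Fin.succAbove]
    simp only [Fin.lt_def, Fin.val_castSucc]
    split_ifs <;> simp
  have c0 : c 0 = 1 := by
    simp only [c, Perm.mul_apply]
    rw [Equiv.swap_apply_of_ne_of_ne n01 n02, Equiv.swap_apply_left]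
  have c1 : c 1 = 2 := by
    simp only [c, Perm.mul_apply]
    rw [Equiv.swap_apply_left, Equiv.swap_apply_of_ne_of_ne n02.symm n12.symm]
  have c2 : c 2 = 0 := by
    simp only [c, Perm.mul_apply]
    rw [Equiv.swap_apply_right, Equiv.swap_apply_right]
  have c3 : c 3 = 3 := by
    simp only [c, Perm.mul_apply]
    rw [Equiv.swap_apply_of_ne_of_ne n31 n32, Equiv.swap_apply_of_ne_of_ne n30 n31]
  have v0 : ((0 : Fin (k + 4)) : ℕ) = 0 := rfl
  have v1 : ((1 : Fin (k + 4)) : ℕ) = 1 :=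
    Nat.mod_eq_of_lt (show 1 < k + 4 by omega)
  have v2 : ((2 : Fin (k + 4)) : ℕ) = 2 :=
    Nat.mod_eq_of_lt (show 2 < k + 4 by omega)
  have v3 : ((3 : Fin (k + 4)) : ℕ) = 3 :=
    Nat.mod_eq_of_lt (show 3 < k + 4 by omega)
  have w0 := hval 0
  have w1 := hval 1
  have w2 := hval 2
  have w3 := hval 3
  rw [c0, v1] at w0
  rw [c1, v2] at w1
  rw [c2, v0] at w2
  rw [c3, v3] at w3
  have p01 := hpar' (Fin.castSucc 0) (Fin.castSucc 1)
  have p12 := hpar' (Fin.castSucc 1) (Fin.castSucc 2)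
  have p23 := hpar' (Fin.castSucc 2) (Fin.castSucc 3)
  simp only [Fin.val_castSucc, v0, v1, v2, v3] at p01 p12 p23
  split_ifs at w0 w1 w2 w3 <;> omega

/-- Degree at least five: a proper subgroup of the symmetric group on `n + 1` points
of index at most `n` is the alternating group. -/
theorem top_of_four_le {n : ℕ} (hn : P n = ⊤) (h4 : 4 ≤ n) (hP3 : P 3 = ⊤) : P (n + 1) = ⊤ := by
  by_contra hne
  have hidx : (P (n + 1)).index ≤ n := by
    have h1 := index_le hP hn
    have h2 := card_ne_factorial hP hn (by omega) hP3
    have h3 := (P (n + 1)).card_mul_index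
    rw [Nat.card_perm, Nat.card_fin, Nat.factorial_succ] at h3
    by_contra! h
    have : (P (n + 1)).index = n + 1 := by omega
    rw [this, mul_comm] at h3
    exact h2 (Nat.eq_of_mul_eq_mul_left (by omega) h3)
  have hcore : Nontrivial (P (n + 1)).normalCore := by
    rw [Subgroup.nontrivial_iff_ne_bot]
    intro hb
    rw [Subgroup.normalCore_eq_ker, MonoidHom.ker_eq_bot_iff] at hb
    have := Nat.card_le_card_of_injective _ hb
    rw [Nat.card_perm, Nat.card_perm, Nat.card_fin] at this
    have h2 := this.trans (Nat.factorial_le (show (P (n+1)).index ≤ n from hidx))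
    have h3 := n.factorial_pos
    rw [Nat.factorial_succ] at h2
    nlinarith
  have hA : alternatingGroup (Fin (n + 1)) ≤ P (n + 1) :=
    (Equiv.Perm.alternatingGroup_le_of_normal (by rw [Nat.card_fin]; omega) hcore).trans
      (Subgroup.normalCore_le _)
  have hdvd := Subgroup.index_dvd_of_le hA
  have : Nontrivial (Fin (n + 1)) := Fin.nontrivial_iff_two_le.2 (by omega)
  rw [alternatingGroup.index_eq_two, Nat.dvd_prime Nat.prime_two] at hdvd
  rcases hdvd with h | h
  · exact hne (Subgroup.index_eq_one.1 h)
  · obtain ⟨k, rfl⟩ : ∃ k, n = k + 3 := ⟨n - 3, by omega⟩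
    have hA := Equiv.Perm.eq_alternatingGroup_of_index_eq_two h
    exact ne_alternatingGroup (k := k) hP hA

/-- Besides the symmetric group and `D4`, index three leaves the two other conjugates of `D4`. One
does not project onto `P 3`; the other has a member that no member of `P 5` extends. -/
theorem four_cases (hP3 : P 3 = ⊤) : P 4 = ⊤ ∨ P 4 = D4 := by
  by_contra! hne
  obtain ⟨hne, hD⟩ := hne
  have h1 := index_le hP hP3
  have h2 := card_ne_factorial hP hP3 le_rfl hP3
  have h3 := (P 4).card_mul_index
  rw [Nat.card_perm, Nat.card_fin] at h3
  simp only [Nat.reduceAdd] at h1 h2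
  have h6 : Nat.factorial 3 = 6 := rfl
  have h24 : Nat.factorial 4 = 24 := rfl
  rw [h6] at h2
  rw [h24] at h3
  have hne1 : (P 4).index ≠ 1 := fun h => hne (Subgroup.index_eq_one.1 h)
  have hne2 : (P 4).index ≠ 2 := fun h =>
    ne_alternatingGroup (k := 0) hP (Equiv.Perm.eq_alternatingGroup_of_index_eq_two h)
  have h8 : Nat.card (P 4) = 8 := by
    generalize Nat.card (P 4) = c at *
    generalize (P 4).index = d at *
    interval_cases d <;> omega
  rcases subgroup_card_eight _ h8 with h | h | h
  · exact hD h
  · -- the first two values are in the same half, so the third cannot be between them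
    have he : StrictMono ![(0 : Fin 4), 1, 2] := by decide
    obtain ⟨π, hπ, hp⟩ := hP.up (OrderEmbedding.ofStrictMono _ he) (Equiv.swap 1 2)
      (by rw [hP3]; trivial)
    rw [h] at hπ
    have a1 : π 0 < π 2 := (hp 0 2).2 (by decide)
    have a2 : π 2 < π 1 := (hp 2 1).2 (by decide)
    have := (π 1).isLt
    simp only [Fin.lt_def] at a1 a2
    omega
  · -- values `1 0 3 2` cannot be extended by a fifth position
    have hpat : (Equiv.swap 0 1 * Equiv.swap 2 3 : Perm (Fin 4)) ∈ P 4 := by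
      rw [h]; decide
    obtain ⟨π, hπ, hp⟩ := hP.up (Fin.castSuccOrderEmb (n := 4)) _ hpat
    have a1 : π 1 < π 0 := (hp 1 0).2 (by decide)
    have a2 : π 0 < π 3 := (hp 0 3).2 (by decide)
    have a3 : π 3 < π 2 := (hp 3 2).2 (by decide)
    -- four positions `a < b < c < d`: the pairs of values at `a, d` and `b, c` are nested
    have hdec : ∀ ρ : Perm (Fin 4), ((ρ 0).val + 1) / 2 % 2 = ((ρ 3).val + 1) / 2 % 2 →
        ((ρ 0 < ρ 1 ↔ ρ 1 < ρ 3) ∧ (ρ 0 < ρ 2 ↔ ρ 2 < ρ 3)) ∨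
        ((ρ 1 < ρ 0 ↔ ρ 0 < ρ 2) ∧ (ρ 1 < ρ 3 ↔ ρ 3 < ρ 2)) := by
      decide +kernel
    have key : ∀ e : Fin 4 → Fin 5, StrictMono e →
        ((π (e 0) < π (e 1) ↔ π (e 1) < π (e 3)) ∧ (π (e 0) < π (e 2) ↔ π (e 2) < π (e 3))) ∨
        ((π (e 1) < π (e 0) ↔ π (e 0) < π (e 2)) ∧ (π (e 1) < π (e 3) ↔ π (e 3) < π (e 2))) := by
      intro e he
      obtain ⟨ρ, hρ⟩ := exists_pat (OrderEmbedding.ofStrictMono e he) π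
      have hm := (h ρ).1 (hP.down _ π ρ hπ hρ)
      have hρ' : ∀ i j, π (e i) < π (e j) ↔ ρ i < ρ j := hρ
      simp only [hρ']
      exact hdec ρ hm
    have k1 := key ![0, 1, 2, 4] (by decide)
    have k2 := key ![0, 1, 3, 4] (by decide)
    have k3 := key ![0, 2, 3, 4] (by decide)
    change π 0 < π 3 at a2
    change π 1 < π 0 at a1
    change π 3 < π 2 at a3
    change ((π 0 < π 1 ↔ π 1 < π 4) ∧ (π 0 < π 2 ↔ π 2 < π 4)) ∨
        ((π 1 < π 0 ↔ π 0 < π 2) ∧ (π 1 < π 4 ↔ π 4 < π 2)) at k1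
    change ((π 0 < π 1 ↔ π 1 < π 4) ∧ (π 0 < π 3 ↔ π 3 < π 4)) ∨
        ((π 1 < π 0 ↔ π 0 < π 3) ∧ (π 1 < π 4 ↔ π 4 < π 3)) at k2
    change ((π 0 < π 2 ↔ π 2 < π 4) ∧ (π 0 < π 3 ↔ π 3 < π 4)) ∨
        ((π 2 < π 0 ↔ π 0 < π 3) ∧ (π 2 < π 4 ↔ π 4 < π 3)) at k3
    simp only [Fin.lt_def] at a1 a2 a3 k1 k2 k3
    omega

theorem three_cases (hP2 : P 2 = ⊤) :
    P 3 = ⊤ ∨ P 3 = alternatingGroup (Fin 3) ∨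
      ∀ π, π ∈ P 3 ↔ (π = 1 ∨ π = Equiv.swap 0 2) := by
  by_cases h1 : P 3 = ⊤
  · exact Or.inl h1
  by_cases h2 : P 3 = alternatingGroup (Fin 3)
  · exact Or.inr (Or.inl h2)
  refine Or.inr (Or.inr ?_)
  have h3 := index_le hP hP2
  have h4 := (P 3).card_mul_index
  rw [Nat.card_perm, Nat.card_fin] at h4
  have h6 : Nat.factorial 3 = 6 := rfl
  have hne1 : (P 3).index ≠ 1 := fun h => h1 (Subgroup.index_eq_one.1 h)
  have hne2 : (P 3).index ≠ 2 := fun h =>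
    h2 (Equiv.Perm.eq_alternatingGroup_of_index_eq_two h)
  have hcard : Nat.card (P 3) = 2 := by
    simp only [Nat.reduceAdd] at h3
    rw [h6] at h4
    generalize Nat.card (P 3) = c at *
    generalize (P 3).index = d at *
    interval_cases d <;> omega
  -- a group of order two has a single nontrivial member, which must reverse both pairs `0, 1`
  -- and `1, 2`
  obtain ⟨σ, hσ, hσ1⟩ : ∃ σ ∈ P 3, σ ≠ 1 := by
    by_contra! h
    have : P 3 = ⊥ := (Subgroup.eq_bot_iff_forall _).2 h
    rw [this] at hcard
    simp at hcard
  have hall : ∀ π, π ∈ P 3 ↔ (π = 1 ∨ π = σ) := by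
    intro π
    constructor
    · intro hπ
      by_contra! hc
      have hsub : ({1, π, σ} : Finset (Perm (Fin 3))).card = 3 :=
        Finset.card_eq_three.2 ⟨1, π, σ, hc.1.symm, hσ1.symm, hc.2, rfl⟩
      have hle : ({1, π, σ} : Finset (Perm (Fin 3))).card ≤ Nat.card (P 3) := by
        rw [← Set.ncard_coe_finset]
        have : Nat.card (P 3) = (P 3 : Set (Perm (Fin 3))).ncard := rfl
        rw [this]
        refine Set.ncard_le_ncard ?_ (Set.toFinite _)
        intro x hx
        simp only [Finset.coe_insert, Finset.coe_singleton, Set.mem_insert_iff,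
          Set.mem_singleton_iff] at hx
        rcases hx with rfl | rfl | rfl
        exacts [one_mem _, hπ, hσ]
      omega
    · rintro (rfl | rfl)
      exacts [one_mem _, hσ]
  have hrev : ∀ e : Fin 2 → Fin 3, StrictMono e → σ (e 1) < σ (e 0) := by
    intro e he
    obtain ⟨π, hπ, hp⟩ := hP.up (OrderEmbedding.ofStrictMono e he) (Equiv.swap 0 1)
      (by rw [hP2]; trivial)
    have h10 : π (e 1) < π (e 0) := (hp 1 0).2 (by decide)
    rcases (hall π).1 hπ with rfl | rfl
    · exact absurd h10 (not_lt.2 (he (by decide)).le)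
    · exact h10
  have hσ' : σ = Equiv.swap 0 2 :=
    (by decide +kernel : ∀ σ : Perm (Fin 3), σ 1 < σ 0 → σ 2 < σ 1 → σ = Equiv.swap 0 2) σ
      (hrev ![0, 1] (by decide)) (hrev ![1, 2] (by decide))
  rwa [hσ'] at hall

/-- If some group of a coherent sequence is proper, the first proper one is the trivial group of
degree two, the group generated by the reversal or the alternating group in degree three, or
`D4` in degree four. -/
theorem classification {m : ℕ} (hm : P m ≠ ⊤) :
    P 2 = ⊥ ∨ (∀ π, π ∈ P 3 ↔ (π = 1 ∨ π = Equiv.swap 0 2)) ∨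
      P 3 = alternatingGroup (Fin 3) ∨ P 4 = D4 := by
  by_cases h2 : P 2 = ⊤
  swap
  · left
    by_contra hb
    have h1 := (P 2).card_mul_index
    rw [Nat.card_perm, Nat.card_fin, Nat.factorial_two] at h1
    rcases (Nat.dvd_prime Nat.prime_two).1 (Dvd.intro_left _ h1) with h | h
    · exact h2 (Subgroup.index_eq_one.1 h)
    · rw [h] at h1
      exact hb (Subgroup.card_eq_one.1 (by omega))
  rcases three_cases hP h2 with h3 | h3 | h3
  · rcases four_cases hP h3 with h4 | h4
    · exfalso
      have hge : ∀ n, 4 ≤ n → P n = ⊤ := by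
        intro n hn
        induction n, hn using Nat.le_induction with
        | base => exact h4
        | succ n hn ih => exact top_of_four_le hP ih hn h3
      rcases le_or_gt 4 m with h | h
      · exact hm (hge m h)
      · interval_cases m
        · exact hm (Subsingleton.elim _ _)
        · exact hm (Subsingleton.elim _ _)
        · exact hm h2
        · exact hm h3
    · exact Or.inr (Or.inr (Or.inr h4))
  · exact Or.inr (Or.inr (Or.inl h3))
  · exact Or.inr (Or.inl h3)

end Sys

/-! ### Homogeneity of the rationals -/

/-- Two tuples of rationals of the same order type are related by an automorphism of `(ℚ, <)`:
the back-and-forth construction is started from the finite partial isomorphism `s i ↦ s' i`. -/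
theorem exists_aut {k : ℕ} (s s' : Fin k → ℚ) (h : ∀ i j, s i < s j ↔ s' i < s' j) :
    ∃ α : ℚ ≃o ℚ, ∀ i, α (s i) = s' i := by
  let p : Order.PartialIso ℚ ℚ := ⟨Finset.univ.image fun i => (s i, s' i), by
    intro a ha b hb
    obtain ⟨i, -, rfl⟩ := Finset.mem_image.1 ha
    obtain ⟨j, -, rfl⟩ := Finset.mem_image.1 hb
    have h1 := h i j
    have h2 := h j i
    simp only
    rcases lt_trichotomy (s i) (s j) with h0 | h0 | h0
    · rw [(cmp_eq_lt_iff _ _).2 h0, (cmp_eq_lt_iff _ _).2 (h1.1 h0)]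
    · have : s' i = s' j := le_antisymm (not_lt.1 fun c => (h2.2 c).ne' h0)
        (not_lt.1 fun c => (h1.2 c).ne h0)
      rw [(cmp_eq_eq_iff _ _).2 h0, (cmp_eq_eq_iff _ _).2 this]
    · rw [(cmp_eq_gt_iff _ _).2 h0, (cmp_eq_gt_iff _ _).2 (h2.1 h0)]⟩
  let toCof : ℚ ⊕ ℚ → Order.Cofinal (Order.PartialIso ℚ ℚ) := fun q =>
    Sum.recOn q (Order.PartialIso.definedAtLeft ℚ) (Order.PartialIso.definedAtRight ℚ)
  let I : Order.Ideal (Order.PartialIso ℚ ℚ) := Order.idealOfCofinals p toCof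
  let F := fun a => Order.PartialIso.funOfIdeal a I
    (Order.cofinal_meets_idealOfCofinals p toCof (Sum.inl a))
  let G := fun b => Order.PartialIso.invOfIdeal b I
    (Order.cofinal_meets_idealOfCofinals p toCof (Sum.inr b))
  refine ⟨OrderIso.ofCmpEqCmp (fun a => (F a).val) (fun b => (G b).val) ?_, ?_⟩
  · intro a b
    obtain ⟨f, hf, ha⟩ := (F a).prop
    obtain ⟨g, hg, hb⟩ := (G b).prop
    obtain ⟨m, -, fm, gm⟩ := I.directed _ hf _ hg
    exact m.prop (a, _) (fm ha) (_, b) (gm hb)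
  · intro i
    obtain ⟨f, hf, ha⟩ := (F (s i)).prop
    obtain ⟨m, -, fm, pm⟩ := I.directed _ hf _ (Order.mem_idealOfCofinals p toCof)
    have hp : (s i, s' i) ∈ p.val := Finset.mem_image.2 ⟨i, Finset.mem_univ _, rfl⟩
    have := m.prop _ (fm ha) _ (pm hp)
    simp only [cmp_self_eq_eq] at this
    exact (cmp_eq_eq_iff _ _).1 this.symm

/-! ### Temporal relations -/

theorem Temporal.congr {k : ℕ} {R : VRel k} (hR : Temporal R) {s s' : Fin k → ℚ}
    (h : ∀ i j, s i < s j ↔ s' i < s' j) : R s = R s' := by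
  obtain ⟨α, hα⟩ := exists_aut s s' h
  have := hR α α.bijective α.strictMono s
  simp only [hα] at this
  exact this.symm

theorem crisp_eq_zero {k : ℕ} {S : Set (Fin k → ℚ)} {x : Fin k → ℚ} :
    crisp S x = 0 ↔ x ∈ S := by
  unfold crisp
  split_ifs with h <;> simp [h]

theorem Temporal.mem_congr {k : ℕ} {S : Set (Fin k → ℚ)} (hS : Temporal (crisp S))
    {s s' : Fin k → ℚ} (h : ∀ i j, s i < s j ↔ s' i < s' j) : s ∈ S ↔ s' ∈ S := by
  rw [← crisp_eq_zero, hS.congr h, crisp_eq_zero]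

/-- A temporal valued relation attains its infimum, since it takes only finitely many values. -/
theorem Temporal.exists_min {k : ℕ} {R : VRel k} (hR : Temporal R) : ∃ t, ∀ s, R t ≤ R s := by
  let τ : (Fin k → ℚ) → (Fin k → Fin k → Prop) := fun t i j => t i < t j
  have hf : Function.FactorsThrough R τ := by
    intro s s' h
    exact hR.congr fun i j => iff_of_eq (congrFun (congrFun h i) j)
  have hfin : (Set.range R).Finite := by
    have : R = (Function.extend τ R fun _ => ⊤) ∘ τ := by
      funext t
      exact (hf.extend_apply _ t).symm
    rw [this, Set.range_comp]
    exact (Set.toFinite _).image _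
  obtain ⟨_, ⟨t, rfl⟩, ht⟩ := Set.exists_min_image (Set.range R) id hfin ⟨_, ⟨0, rfl⟩⟩
  exact ⟨t, fun s => ht _ ⟨s, rfl⟩⟩

/-- Every automorphism of `(ℚ, <)` leaves the whole valued relational clone invariant. -/
theorem Clone.temporal {Γ : Set ((k : ℕ) × VRel k)} (hT : ∀ p ∈ Γ, Temporal p.2) {k : ℕ}
    {R : VRel k} (h : Clone Γ R) : Temporal R := by
  induction h with
  | base h => exact hT _ h
  | eqRel =>
    intro α hα _ t
    simp [crisp, hα.1.eq_iff]
  | emptyRel =>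
    intro α _ _ t
    simp [crisp]
  | sum σ _ ih =>
    intro α hα hm x
    exact Finset.sum_congr rfl fun i _ => ih i α hα hm (fun j => x (σ i j))
  | @proj k n R R' _ hg ih =>
    intro α hα hm s
    refine (hg _).unique ?_
    convert hg s using 1
    have hap : ∀ t : Fin n → ℚ, R (Fin.append (fun i => α (s i)) fun i => α (t i)) =
        R (Fin.append s t) := by
      intro t
      rw [← ih α hα hm (Fin.append s t)]
      congr 1
      funext i
      refine Fin.addCases (fun i => ?_) (fun i => ?_) i <;> simp
    ext v
    constructor
    · rintro ⟨t, rfl⟩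
      choose g hg using hα.2
      refine ⟨fun i => g (t i), ?_⟩
      rw [← hap]
      simp [hg]
    · rintro ⟨t, rfl⟩
      exact ⟨fun i => α (t i), (hap t).symm⟩
  | shift c _ ih =>
    intro α hα hm t
    simp only [ih α hα hm t]
  | scale q _ _ ih =>
    intro α hα hm t
    simp only [ih α hα hm t]
  | feas _ ih =>
    intro α hα hm t
    simp only [ih α hα hm t]
  | opt _ ih =>
    intro α hα hm t
    simp only [ih α hα hm t]

/-! ### Crisp relations in a valued relational clone -/

section CrispClone
variable {Γ : Set ((k : ℕ) × VRel k)}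

theorem Clone.add {n : ℕ} {A B : VRel n} (hA : Clone Γ A) (hB : Clone Γ B) :
    Clone Γ (fun x => A x + B x) := by
  have := Clone.sum (Γ := Γ) (m := 2) (n := n) (k := fun _ => n) (R := ![A, B]) (fun _ j => j)
    (by intro i; fin_cases i; exacts [hA, hB])
  simpa [Fin.sum_univ_two] using this

theorem Clone.relabel {k n : ℕ} {R : VRel k} (hR : Clone Γ R) (σ : Fin k → Fin n) :
    Clone Γ (fun x => R fun j => x (σ j)) := by
  have := Clone.sum (Γ := Γ) (m := 1) (n := n) (k := fun _ => k) (R := fun _ => R) (fun _ => σ)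
    (fun _ => hR)
  simpa using this

theorem Clone.inter {n : ℕ} {S T : Set (Fin n → ℚ)} (hS : Clone Γ (crisp S))
    (hT : Clone Γ (crisp T)) : Clone Γ (crisp (S ∩ T)) := by
  convert hS.add hT using 1
  funext x
  by_cases h1 : x ∈ S <;> by_cases h2 : x ∈ T <;> simp [crisp, h1, h2]

theorem Clone.univ (n : ℕ) : Clone Γ (crisp (Set.univ : Set (Fin n → ℚ))) := by
  have := Clone.sum (Γ := Γ) (m := 0) (n := n) (k := fun _ => 0) (R := fun _ _ => 0)
    (fun i => i.elim0) (fun i => i.elim0)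
  convert this using 1
  funext x
  simp [crisp]

theorem Clone.biInter {n : ℕ} {ι : Type*} (F : Finset ι) (S : ι → Set (Fin n → ℚ))
    (h : ∀ i ∈ F, Clone Γ (crisp (S i))) : Clone Γ (crisp (⋂ i ∈ F, S i)) := by
  induction F using Finset.induction_on with
  | empty => simpa using Clone.univ n
  | insert a F ha ih =>
    rw [Finset.set_biInter_insert]
    exact (h a (Finset.mem_insert_self _ _)).inter
      (ih fun i hi => h i (Finset.mem_insert_of_mem hi))

theorem Clone.preimage {k n : ℕ} {S : Set (Fin k → ℚ)} (hS : Clone Γ (crisp S))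
    (σ : Fin k → Fin n) : Clone Γ (crisp {x : Fin n → ℚ | (fun j => x (σ j)) ∈ S}) :=
  hS.relabel σ

theorem Clone.eq_coord {n : ℕ} (i j : Fin n) : Clone Γ (crisp {x : Fin n → ℚ | x i = x j}) := by
  simpa using (Clone.eqRel (Γ := Γ)).preimage ![i, j]

/-- Valued relational clones are closed under images of crisp relations along coordinate maps. -/
theorem Clone.image {k n : ℕ} {S : Set (Fin n → ℚ)} (hS : Clone Γ (crisp S))
    (e : Fin k → Fin n) : Clone Γ (crisp {s : Fin k → ℚ | ∃ x ∈ S, ∀ i, s i = x (e i)}) := by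
  have hU := (hS.preimage (Fin.natAdd k)).inter (Clone.biInter Finset.univ
    (fun i : Fin k => {y : Fin (k + n) → ℚ | y (Fin.castAdd n i) = y (Fin.natAdd k (e i))})
    fun i _ => Clone.eq_coord _ _)
  refine Clone.proj hU fun s => ?_
  by_cases hs : ∃ x ∈ S, ∀ i, s i = x (e i)
  · have h0 : crisp {s : Fin k → ℚ | ∃ x ∈ S, ∀ i, s i = x (e i)} s = 0 :=
      crisp_eq_zero.2 hs
    rw [h0]
    obtain ⟨x, hx, he⟩ := hs
    refine ⟨?_, fun b hb => ?_⟩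
    · rintro v ⟨t, rfl⟩
      unfold crisp
      split_ifs <;> simp
    · refine hb ⟨x, ?_⟩
      symm
      rw [crisp_eq_zero]
      simp [hx, he]
  · have h0 : crisp {s : Fin k → ℚ | ∃ x ∈ S, ∀ i, s i = x (e i)} s = ⊤ := if_neg hs
    rw [h0]
    refine ⟨?_, fun b _ => le_top⟩
    rintro v ⟨t, rfl⟩
    refine le_of_eq (if_neg ?_).symm
    intro h
    refine hs ⟨t, ?_, ?_⟩
    · simpa using h.1
    · simpa using h.2

theorem Clone.optSet {k : ℕ} {R : VRel k} (h : Clone Γ R) : Clone Γ (crisp (OptSet R)) := by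
  convert h.opt using 1
  funext t
  by_cases ht : R t ≠ ⊤ ∧ ∀ s, R t ≤ R s
  · rw [if_pos ht]; exact if_pos ht
  · rw [if_neg ht]; exact if_neg ht

end CrispClone

/-! ### Pattern groups of a valued relational clone -/

/-- The injective `n`-tuples of rationals whose relative order is that of the values of some
permutation in `A`. -/
def OrdRel (n : ℕ) (A : Set (Perm (Fin n))) : Set (Fin n → ℚ) :=
  {x | ∃ π ∈ A, ∀ i j, x i < x j ↔ π i < π j}

theorem mem_OrdRel {n : ℕ} {A : Set (Perm (Fin n))} {x : Fin n → ℚ} {π : Perm (Fin n)}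
    (h : ∀ i j, x i < x j ↔ π i < π j) : x ∈ OrdRel n A ↔ π ∈ A := by
  constructor
  · rintro ⟨ρ, hρ, h'⟩
    have : π = ρ := pattern_unique fun i j => (h i j).symm.trans (h' i j)
    rwa [this]
  · exact fun hπ => ⟨π, hπ, h⟩

theorem injective_of_pattern {n : ℕ} {x : Fin n → ℚ} {π : Perm (Fin n)}
    (h : ∀ i j, x i < x j ↔ π i < π j) : Function.Injective x := by
  intro i j hij
  by_contra hne
  rcases lt_or_gt_of_ne (π.injective.ne hne) with h1 | h1
  · exact ((h i j).2 h1).ne hij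
  · exact ((h j i).2 h1).ne hij.symm

theorem OrdRel_eq {n : ℕ} {A : Set (Perm (Fin n))} {S : Set (Fin n → ℚ)}
    (hS : ∀ x ∈ S, Function.Injective x)
    (h : ∀ x (π : Perm (Fin n)), (∀ i j, x i < x j ↔ π i < π j) → (x ∈ S ↔ π ∈ A)) :
    OrdRel n A = S := by
  ext x
  constructor
  · rintro ⟨π, hπ, hx⟩
    exact (h x π hx).2 hπ
  · intro hx
    obtain ⟨π, hπ⟩ := exists_pattern x (hS x hx)
    exact ⟨π, (h x π hπ).1 hx, hπ⟩

/-- The values of a permutation as a tuple of rationals. -/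
def ratTuple {n : ℕ} (π : Perm (Fin n)) : Fin n → ℚ := fun i => ((π i : ℕ) : ℚ)

theorem ratTuple_lt {n : ℕ} (π : Perm (Fin n)) (i j : Fin n) :
    ratTuple π i < ratTuple π j ↔ π i < π j := by
  simp [ratTuple]

/-- A temporal set of injective tuples is determined by the order types of its members. -/
theorem OrdRel_ratTuple {n : ℕ} {S : Set (Fin n → ℚ)} (hT : Temporal (crisp S))
    (hS : ∀ x ∈ S, Function.Injective x) : OrdRel n {π | ratTuple π ∈ S} = S := by
  refine OrdRel_eq hS fun x π h => hT.mem_congr fun i j => ?_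
  rw [h, ratTuple_lt]

section Pattern
variable {Γ : Set ((k : ℕ) × VRel k)}

/-- The permutations lying in every set of patterns that contains the identity and defines a
crisp relation of the valued relational clone. -/
def patSet (Γ : Set ((k : ℕ) × VRel k)) (n : ℕ) : Set (Perm (Fin n)) :=
  {π | ∀ A : Set (Perm (Fin n)), Clone Γ (crisp (OrdRel n A)) → 1 ∈ A → π ∈ A}

theorem clone_relabel {n : ℕ} {A : Set (Perm (Fin n))} (hA : Clone Γ (crisp (OrdRel n A)))
    (σ : Perm (Fin n)) : Clone Γ (crisp (OrdRel n {π | π * σ ∈ A})) := by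
  convert hA.preimage σ using 2
  refine OrdRel_eq ?_ fun x π h => ?_
  · rintro x ⟨π, -, hx⟩
    have := injective_of_pattern hx
    intro i j hij
    have h1 := @this (σ.symm i) (σ.symm j) (by simpa using hij)
    exact σ.symm.injective h1
  · exact mem_OrdRel fun i j => h (σ i) (σ j)

/-- The pattern group of degree `n` of a valued relational clone; closure under products holds
because permuting coordinates turns a set `A` of patterns into its right translates. -/
def patGroup (Γ : Set ((k : ℕ) × VRel k)) (n : ℕ) : Subgroup (Perm (Fin n)) :=
  let M : Submonoid (Perm (Fin n)) :=
    { carrier := patSet Γ n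
      one_mem' := fun _ _ h => h
      mul_mem' := fun {a b} ha hb A hA h1 =>
        ha {π | π * b ∈ A} (clone_relabel hA b) (by simpa using hb A hA h1) }
  { M with
    inv_mem' := fun {a} ha => by
      have h1 : Submonoid.powers a ≤ M := (Submonoid.powers_le).2 ha
      exact h1 (mem_powers_iff_mem_zpowers.2 (inv_mem (Subgroup.mem_zpowers a))) }

theorem mem_patGroup {n : ℕ} {π : Perm (Fin n)} : π ∈ patGroup Γ n ↔
    ∀ A : Set (Perm (Fin n)), Clone Γ (crisp (OrdRel n A)) → 1 ∈ A → π ∈ A := Iff.rfl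

theorem clone_injective (hne : Clone Γ (crisp NeS)) (n : ℕ) :
    Clone Γ (crisp (OrdRel n Set.univ)) := by
  have := Clone.biInter (Γ := Γ) (Finset.univ.filter fun p : Fin n × Fin n => p.1 ≠ p.2)
    (fun p => {x : Fin n → ℚ | (fun j => x (![p.1, p.2] j)) ∈ NeS}) fun p _ => hne.preimage _
  convert this using 2
  refine OrdRel_eq ?_ fun x π h => ?_
  · intro x hx i j hij
    by_contra hc
    simp only [Set.mem_iInter] at hx
    exact hx (i, j) (by simpa using hc) hij
  · simp only [Set.mem_iInter, Set.mem_univ, iff_true]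
    intro p hp hc
    exact (Finset.mem_filter.1 hp).2 (injective_of_pattern h hc)

theorem clone_patGroup (hne : Clone Γ (crisp NeS)) (n : ℕ) :
    Clone Γ (crisp (OrdRel n (patGroup Γ n))) := by
  have h0 : Clone Γ (crisp (⋂ A ∈ (Finset.univ.filter fun A : Set (Perm (Fin n)) =>
      Clone Γ (crisp (OrdRel n A)) ∧ 1 ∈ A), OrdRel n A)) :=
    Clone.biInter _ _ fun A hA => (Finset.mem_filter.1 hA).2.1
  convert h0 using 2
  refine OrdRel_eq ?_ fun x π h => ?_
  · intro x hx
    simp only [Set.mem_iInter] at hx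
    obtain ⟨π, -, hπ⟩ := hx Set.univ (by simpa using clone_injective hne n)
    exact injective_of_pattern hπ
  · simp only [Set.mem_iInter, mem_OrdRel h, Finset.mem_filter, Finset.mem_univ, true_and,
      SetLike.mem_coe, mem_patGroup, and_imp]

/-- The pattern groups are coherent: restricting to a subset of the coordinates corresponds to a
preimage (`down`) and to a projection (`up`) of crisp relations. -/
theorem patSys_patGroup (hne : Clone Γ (crisp NeS)) : PatSys (patGroup Γ) where
  down := by
    intro k n e π ρ hπ hp A hA h1
    have hB : Clone Γ (crisp (OrdRel n {τ | ∃ ρ' ∈ A, Pat e τ ρ'})) := by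
      convert (clone_injective hne n).inter (hA.preimage e) using 2
      refine OrdRel_eq ?_ fun x τ h => ?_
      · rintro x ⟨⟨τ, -, hτ⟩, -⟩
        exact injective_of_pattern hτ
      · have hu : x ∈ OrdRel n Set.univ := ⟨τ, trivial, h⟩
        simp only [Set.mem_inter_iff, hu, true_and]
        constructor
        · rintro ⟨ρ', hρ', hx⟩
          exact ⟨ρ', hρ', fun i j => (h _ _).symm.trans (hx i j)⟩
        · rintro ⟨ρ', hρ', hx⟩
          exact ⟨ρ', hρ', fun i j => (h _ _).trans (hx i j)⟩
    obtain ⟨ρ', hρ', hp'⟩ := hπ _ hB ⟨1, h1, fun i j => by simp⟩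
    have : ρ = ρ' := pattern_unique fun i j => (hp i j).symm.trans (hp' i j)
    rwa [this]
  up := by
    intro k n e ρ hρ
    refine hρ {ρ' | ∃ π ∈ patGroup Γ n, Pat e π ρ'} ?_ ⟨1, one_mem _, fun i j => by simp⟩
    convert (clone_patGroup hne n).image e using 2
    refine OrdRel_eq ?_ fun s ρ' h => ?_
    · rintro s ⟨x, ⟨π, -, hx⟩, hs⟩ i j hij
      rw [hs, hs] at hij
      exact e.injective (injective_of_pattern hx hij)
    · constructor
      · rintro ⟨x, ⟨π, hπ, hx⟩, hs⟩
        refine ⟨π, hπ, fun i j => ?_⟩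
        rw [← hx, ← hs, ← hs, h]
      · rintro ⟨π, hπ, hp⟩
        obtain ⟨α, hα⟩ := exists_aut (fun i => ratTuple π (e i)) s
          fun i j => by rw [ratTuple_lt, hp, h]
        refine ⟨fun i => α (ratTuple π i), ⟨π, hπ, fun i j => ?_⟩, fun i => (hα i).symm⟩
        rw [α.lt_iff_lt, ratTuple_lt]

theorem clone_of_patGroup {n : ℕ} (hne : Clone Γ (crisp NeS)) {S : Set (Fin n → ℚ)}
    (hS : ∀ x ∈ S, Function.Injective x)
    (h : ∀ x (π : Perm (Fin n)), (∀ i j, x i < x j ↔ π i < π j) →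
      (x ∈ S ↔ π ∈ patGroup Γ n)) : Clone Γ (crisp S) := by
  rw [← OrdRel_eq hS h]
  exact clone_patGroup hne n

end Pattern

/-! ### Obtaining disequality and a proper pattern group -/

section Steps
variable {Γ : Set ((k : ℕ) × VRel k)} (hT : ∀ p ∈ Γ, Temporal p.2)
include hT

/-- If the constant-zero operation does not improve `Γ`, some optimal set has no constant members.
Identifying as many coordinates as possible and projecting to two coordinates that remain
distinct yields a nonempty irreflexive temporal binary relation. -/
theorem clone_lt_or_ne (hc : ¬ ∀ p ∈ Γ, Improves1 (fun _ => 0) p.2) :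
    Clone Γ (crisp LtS) ∨ Clone Γ (crisp NeS) := by
  obtain ⟨⟨k, R⟩, hR, hR'⟩ : ∃ p ∈ Γ, ¬ Improves1 (fun _ => 0) p.2 := by
    by_contra! h
    exact hc h
  obtain ⟨t₀, ht₀⟩ : ∃ t₀ : Fin k → ℚ, R t₀ < R (fun _ => 0) := by
    by_contra! h
    exact hR' h
  have hRT : Temporal R := hT _ hR
  have hS := (Clone.base hR).optSet
  obtain ⟨t₁, ht₁⟩ := hRT.exists_min
  have hne : (OptSet R).Nonempty :=
    ⟨t₁, ((ht₁ t₀).trans_lt (ht₀.trans_le le_top)).ne, ht₁⟩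
  have hconst : ∀ x ∈ OptSet R, ∃ i j, x i ≠ x j := by
    intro x hx
    by_contra! h
    have : R x = R (fun _ => 0) := hRT.congr fun i j => by simp [h i j]
    exact absurd (hx.2 t₀) (not_le.2 (this ▸ ht₀))
  -- `K x` is the kernel of `x`; a member with maximal kernel is chosen
  let K : (Fin k → ℚ) → Finset (Fin k × Fin k) := fun x => Finset.univ.filter fun p => x p.1 = x p.2
  obtain ⟨_, ⟨t, ht, rfl⟩, hmax⟩ := Set.exists_max_image (K '' OptSet R) Finset.card
    (Set.toFinite _) (hne.image K)
  have hS' := hS.inter (Clone.biInter (K t) (fun p => {x : Fin k → ℚ | x p.1 = x p.2})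
    fun p _ => Clone.eq_coord _ _)
  obtain ⟨i, j, hij⟩ := hconst t ht
  have hB := hS'.image ![i, j]
  have hBT := hB.temporal hT
  set B : Set (Fin 2 → ℚ) := {s | ∃ x ∈ OptSet R ∩ ⋂ p ∈ K t, {x : Fin k → ℚ | x p.1 = x p.2},
    ∀ a, s a = x (![i, j] a)} with hBdef
  have hirr : ∀ s ∈ B, s 0 ≠ s 1 := by
    rintro s ⟨x, ⟨hx, hx'⟩, hs⟩ h
    have hsub : K t ⊆ K x := by
      intro p hp
      have := Set.mem_iInter₂.1 hx' p hp
      exact Finset.mem_filter.2 ⟨Finset.mem_univ _, this⟩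
    have := Finset.eq_of_subset_of_card_le hsub (hmax _ ⟨x, hx, rfl⟩)
    rw [hs, hs] at h
    have h2 : (i, j) ∈ K t := by
      rw [this]
      exact Finset.mem_filter.2 ⟨Finset.mem_univ _, h⟩
    exact hij (Finset.mem_filter.1 h2).2
  have htB : (fun a => t (![i, j] a)) ∈ B := by
    refine ⟨t, ⟨ht, ?_⟩, fun _ => rfl⟩
    exact Set.mem_iInter₂.2 fun p hp => (Finset.mem_filter.1 hp).2
  have same : ∀ s s' : Fin 2 → ℚ, (s 0 < s 1 ∧ s' 0 < s' 1) ∨ (s 1 < s 0 ∧ s' 1 < s' 0) →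
      s ∈ B → s' ∈ B := by
    intro s s' h
    refine (hBT.mem_congr fun a b => ?_).1
    rcases h with ⟨h1, h2⟩ | ⟨h1, h2⟩ <;> fin_cases a <;> fin_cases b <;>
      simp [h1, h2, h1.not_gt, h2.not_gt]
  by_cases h1 : ∃ s ∈ B, s 0 < s 1
  · obtain ⟨s, hs, h1⟩ := h1
    by_cases h2 : ∃ s ∈ B, s 1 < s 0
    · obtain ⟨s', hs', h2⟩ := h2
      right
      convert hB using 2
      ext x
      refine ⟨fun hx => ?_, hirr x⟩
      rcases lt_or_gt_of_ne (show x 0 ≠ x 1 from hx) with h | h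
      · exact same s x (Or.inl ⟨h1, h⟩) hs
      · exact same s' x (Or.inr ⟨h2, h⟩) hs'
    · left
      convert hB using 2
      ext x
      refine ⟨fun hx => same s x (Or.inl ⟨h1, hx⟩) hs, fun hx => ?_⟩
      rcases lt_or_gt_of_ne (hirr x hx) with h | h
      · exact h
      · exact absurd ⟨x, hx, h⟩ h2
  · left
    have h2 : ∃ s ∈ B, s 1 < s 0 := by
      rcases lt_or_gt_of_ne (hirr _ htB) with h | h
      · exact absurd ⟨_, htB, h⟩ h1
      · exact ⟨_, htB, h⟩
    obtain ⟨s, hs, h2⟩ := h2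
    convert hB.preimage ![1, 0] using 2
    ext x
    refine ⟨fun hx => same s _ (Or.inr ⟨h2, ?_⟩) hs, fun hx => ?_⟩
    · simpa [LtS] using hx
    · rcases lt_or_gt_of_ne (hirr _ hx) with h | h
      · exact absurd ⟨_, hx, h⟩ h1
      · simpa [LtS] using h

/-- If some bijection does not preserve `Γ`, some pattern group is proper: a suitable minor of a
member of `Γ`, restricted to injective tuples, is not constant there, so its optimal set
contains some but not all order types of injective tuples. -/
theorem exists_patGroup_ne_top (hne : Clone Γ (crisp NeS))
    (hns : ∃ β : ℚ → ℚ, Function.Bijective β ∧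
      ∃ p ∈ Γ, ∃ t : Fin p.1 → ℚ, p.2 (fun i => β (t i)) ≠ p.2 t) :
    ∃ m, patGroup Γ m ≠ ⊤ := by
  obtain ⟨β, hβ, ⟨k, R⟩, hR, t, ht⟩ := hns
  simp only at t ht
  obtain ⟨m, ⟨e⟩⟩ := Finite.exists_equiv_fin (Set.range t)
  let u : Fin m → ℚ := fun j => (e.symm j).1
  let q : Fin k → Fin m := fun i => e ⟨t i, i, rfl⟩
  have hu : Function.Injective u := Subtype.val_injective.comp e.symm.injective
  have huq : ∀ i, u (q i) = t i := fun i => by simp [u, q]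
  have hinj := clone_injective hne m
  have hQ := ((Clone.base hR).relabel q).add hinj
  set Q : VRel m := fun x => R (fun j => x (q j)) + crisp (OrdRel m Set.univ) x with hQdef
  have hQT : Temporal Q := hQ.temporal hT
  have hQval : ∀ x, Function.Injective x → Q x = R fun j => x (q j) := by
    intro x hx
    obtain ⟨π, hπ⟩ := exists_pattern x hx
    have h0 : crisp (OrdRel m Set.univ) x = 0 := crisp_eq_zero.2 ⟨π, trivial, hπ⟩
    rw [hQdef]
    simp only [h0, add_zero]
  have hQtop : ∀ x, Q x ≠ ⊤ → Function.Injective x := by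
    intro x hx
    by_contra hc
    refine hx ?_
    have h0 : crisp (OrdRel m Set.univ) x = ⊤ :=
      if_neg fun ⟨π, _, hπ⟩ => hc (injective_of_pattern hπ)
    rw [hQdef]
    simp only [h0, add_top]
  have hval : Q (fun j => β (u j)) ≠ Q u := by
    rw [hQval _ hu, hQval (fun j => β (u j)) (hβ.1.comp hu)]
    simp only [huq]
    exact ht
  obtain ⟨x₀, hx₀⟩ := hQT.exists_min
  have hx₀top : Q x₀ ≠ ⊤ := by
    intro h
    rw [h] at hx₀
    exact hval ((top_le_iff.1 (hx₀ fun j => β (u j))).trans (top_le_iff.1 (hx₀ u)).symm)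
  have hO := hQ.optSet
  have hOT := hO.temporal hT
  have hOinj : ∀ x ∈ OptSet Q, Function.Injective x := fun x hx => hQtop x hx.1
  obtain ⟨y, hy, hy'⟩ : ∃ y, Function.Injective y ∧ y ∉ OptSet Q := by
    by_contra! h
    have h1 := h _ hu
    have h2 := h (fun j => β (u j)) (hβ.1.comp hu)
    exact hval (le_antisymm (h2.2 _) (h1.2 fun j => β (u j)))
  rw [← OrdRel_ratTuple hOT hOinj] at hO
  obtain ⟨π₀, h0⟩ := exists_pattern x₀ (hQtop _ hx₀top)
  obtain ⟨π₁, h1⟩ := exists_pattern y hy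
  refine ⟨m, fun htop => hy' ?_⟩
  have hmem : π₁ * π₀⁻¹ ∈ patGroup Γ m := by rw [htop]; trivial
  have h2 := hmem _ (clone_relabel hO π₀) (by
    have : x₀ ∈ OptSet Q := ⟨hx₀top, hx₀⟩
    rw [← OrdRel_ratTuple hOT hOinj] at this
    simpa using (mem_OrdRel h0).1 this)
  simp only [Set.mem_ofPred_eq, inv_mul_cancel_right] at h2
  rw [← OrdRel_ratTuple hOT hOinj]
  exact (mem_OrdRel h1).2 h2

end Steps

/-! ### Conclusion -/

/-- If some bijection of `ℚ` fails to preserve some relation of a set `Γ` of temporal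
valued relations and the constant-zero operation does not improve `Γ`, then `⟨Γ⟩`
contains `Betw`, `Cyc`, `Sep`, or crisp `<`. -/
theorem stmt10 (Γ : Set ((k : ℕ) × VRel k)) (hT : ∀ p ∈ Γ, Temporal p.2)
    (hns : ∃ β : ℚ → ℚ, Function.Bijective β ∧
      ∃ p ∈ Γ, ∃ t : Fin p.1 → ℚ, p.2 (fun i => β (t i)) ≠ p.2 t)
    (hc : ¬ ∀ p ∈ Γ, Improves1 (fun _ => 0) p.2) :
    Clone Γ (crisp BetwS) ∨ Clone Γ (crisp CycS) ∨ Clone Γ (crisp SepS) ∨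
      Clone Γ (crisp LtS) := by
  rcases clone_lt_or_ne hT hc with hlt | hne
  · exact Or.inr (Or.inr (Or.inr hlt))
  obtain ⟨m, hm⟩ := exists_patGroup_ne_top hT hne hns
  rcases classification (patSys_patGroup hne) hm with h | h | h | h
  · refine Or.inr (Or.inr (Or.inr (clone_of_patGroup hne ?_ ?_)))
    · intro x (hx : x 0 < x 1) i j hij
      fin_cases i <;> fin_cases j <;> simp_all
    · intro x π hx
      rw [h, Subgroup.mem_bot]
      change x 0 < x 1 ↔ _
      rw [hx]
      clear hx x
      revert π
      decide
  · refine Or.inl (clone_of_patGroup hne ?_ ?_)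
    · rintro x (⟨h1, h2⟩ | ⟨h1, h2⟩)
      · exact (Fin.strictMono_iff_lt_succ.2 (by intro i; fin_cases i; exacts [h1, h2])).injective
      · exact (Fin.strictAnti_iff_succ_lt.2 (by intro i; fin_cases i; exacts [h2, h1])).injective
    · intro x π hx
      rw [h]
      change (x 0 < x 1 ∧ x 1 < x 2) ∨ (x 2 < x 1 ∧ x 1 < x 0) ↔ _
      simp only [hx]
      clear hx x
      revert π
      decide
  · refine Or.inr (Or.inl (clone_of_patGroup hne ?_ ?_))
    · intro x hx
      have h01 : x 0 ≠ x 1 := by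
        rcases hx with ⟨h1, h2⟩ | ⟨h1, h2⟩ | ⟨h1, h2⟩ <;> intro h <;> linarith
      have h02 : x 0 ≠ x 2 := by
        rcases hx with ⟨h1, h2⟩ | ⟨h1, h2⟩ | ⟨h1, h2⟩ <;> intro h <;> linarith
      have h12 : x 1 ≠ x 2 := by
        rcases hx with ⟨h1, h2⟩ | ⟨h1, h2⟩ | ⟨h1, h2⟩ <;> intro h <;> linarith
      intro i j hij
      fin_cases i <;> fin_cases j <;> simp_all
    · intro x π hx
      rw [h, Equiv.Perm.mem_alternatingGroup]
      change (x 0 < x 1 ∧ x 1 < x 2) ∨ (x 1 < x 2 ∧ x 2 < x 0) ∨ (x 2 < x 0 ∧ x 0 < x 1) ↔ _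
      simp only [hx]
      clear hx x
      revert π
      decide
  · refine Or.inr (Or.inr (Or.inl ?_))
    -- `D4` separates the pairs of coordinates `0, 2` and `1, 3`, while `Sep` uses `0, 1` and `2, 3`
    have hS : Clone Γ (crisp {x : Fin 4 → ℚ | (fun j => x (Equiv.swap 1 2 j)) ∈ SepS}) := by
      refine clone_of_patGroup hne ?_ ?_
      · rintro x ⟨hx, -⟩ i j hij
        have h1 := @hx (Equiv.swap 1 2 i) (Equiv.swap 1 2 j) (by simpa using hij)
        exact (Equiv.swap (1 : Fin 4) 2).injective h1
      · intro x π hx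
        have hinj : Function.Injective fun j => x (Equiv.swap (1 : Fin 4) 2 j) :=
          (injective_of_pattern hx).comp (Equiv.injective _)
        have e0 : Equiv.swap (1 : Fin 4) 2 0 = 0 := by decide
        have e1 : Equiv.swap (1 : Fin 4) 2 1 = 2 := by decide
        have e2 : Equiv.swap (1 : Fin 4) 2 2 = 1 := by decide
        have e3 : Equiv.swap (1 : Fin 4) 2 3 = 3 := by decide
        simp only [Set.mem_ofPred_eq, SepS, hinj, true_and, StrictBetween, e0, e1, e2, e3, hx, h,
          mem_D4, Xor']
        clear hx hinj x
        revert π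
        decide +kernel
    convert hS.preimage (Equiv.swap 1 2) using 2
    ext x
    simp
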